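/- Let Z_{m,n} denote the number of perfect matchings of the m×n torus grid graph. Then (1/(mn))·log Z_{m,n} → G/π as m, n → ∞ through even integers, where G is Catalan's constant. Precisely: for every ε > 0 there exists M such that for all even integers m, n ≥ M, |(1/(mn))·log Z_{m,n} − G/π| < ε. -/

import Mathlib

/-- The m×n torus grid graph on vertex set (ℤ/mℤ)×(ℤ/nℤ): two vertices are adjacent
iff they differ by (±1, 0) or (0, ±1). -/
def torusGridGraph (m n : ℕ) : SimpleGraph (ZMod m × ZMod n) :=
  SimpleGraph.fromRel (fun u v => v = u + (1, 0) ∨ v = u + (0, 1))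

/-- A perfect matching of a graph `G` is a set of edges of `G` covering each vertex
exactly once. -/
def IsPerfectMatchingSet {V : Type*} (G : SimpleGraph V) (M : Finset (Sym2 V)) : Prop :=
  (∀ e ∈ M, e ∈ G.edgeSet) ∧ ∀ v : V, ∃! e, e ∈ M ∧ v ∈ e

/-- The number of perfect matchings of `G`. -/
noncomputable def numPerfectMatchings {V : Type*} (G : SimpleGraph V) : ℕ :=
  Nat.card {M : Finset (Sym2 V) // IsPerfectMatchingSet G M}

/-- Catalan's constant G = 1 - 1/3² + 1/5² - 1/7² + ⋯ -/
noncomputable def catalanConstant : ℝ := ∑' k : ℕ, (-1 : ℝ) ^ k / (2 * k + 1) ^ 2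

/-!
Cut a torus of even circumferences along its rows and read a perfect matching as a closed walk on
the sets of vertical edges between consecutive rows, so that the number of matchings is the trace
of the `m`-th power of a row transfer matrix. Comparing every set of vertical edges with the
reference configuration that occupies the columns of one parity, alternating from row to row, the
discrepancies behave as particles: their number is conserved, in one row those on the even columns
stay or jump to a neighbouring column while the others stay, in the next row the reverse happens,
and no two particles cross. Hence the transfer matrix on `k` particles consists alternately of the
minors of a one-particle matrix `C` and of its transpose. A particle jumping across the boundary
of the row permutes the `k` particles cyclically, which is compensated by giving that jump the
weight `(-1) ^ (k + 1)`.

Plane waves of momentum `θ` diagonalize `Cᵀ * C`, with eigenvalues `exp (2 * arsinh (cos θ))`.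
Therefore the number of matchings is the sum over the sets of momenta of
`exp (m * ∑ θ, arsinh (cos θ))`. Among these `2 ^ n` terms the largest occupies the `n / 2` momenta
of positive energy, so the logarithm is `m / 2` times a Riemann sum of `|arsinh (cos θ)|`, up to an
error `n * log 2`. Writing `arsinh c` as the integral of `c / √(1 + (t * c) ^ 2)` over `t ∈ [0, 1]`
and integrating over `θ` first, the integral of `|arsinh (cos θ)|` over a period becomes four
times the integral of `arctan t / t` over `[0, 1]`, that is, `4 * G`.
-/

open Finset Matrix
open scoped symmDiff

/-! ### Closed walks and compound matrices -/

section Walks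

variable {ι R : Type*} [Fintype ι] [DecidableEq ι] [CommSemiring R]

lemma pow_succ_apply_eq_sum_walks (P : Matrix ι ι R) (k : ℕ) (a b : ι) :
    (P ^ (k + 1)) a b = ∑ x : Fin k → ι, ∏ i : Fin (k + 1),
      P ((Fin.cons a x : Fin (k + 1) → ι) i) ((Fin.snoc x b : Fin (k + 1) → ι) i) := by
  induction k generalizing a with
  | zero => simp [Fin.snoc]
  | succ k ih =>
    rw [pow_succ', Matrix.mul_apply, ← (Fin.consEquiv fun _ ↦ ι).sum_comp, Fintype.sum_prod_type]
    refine sum_congr rfl fun c _ ↦ ?_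
    rw [ih, mul_sum]
    refine sum_congr rfl fun x _ ↦ ?_
    simp [Fin.consEquiv, Fin.prod_univ_succ (n := k + 1), ← Fin.cons_snoc_eq_snoc_cons]

lemma trace_pow_succ_eq_sum_closed_walks (P : Matrix ι ι R) (k : ℕ) :
    (P ^ (k + 1)).trace = ∑ x : Fin (k + 1) → ι, ∏ i, P (x i) (x (i + 1)) := by
  rw [← (Fin.consEquiv fun _ ↦ ι).sum_comp, Fintype.sum_prod_type, Matrix.trace]
  simp [Fin.consEquiv, pow_succ_apply_eq_sum_walks, Fin.snoc_eq_cons_rotate]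

end Walks

section Compound

variable {I R : Type*} [LinearOrder I] [CommRing R]

/-- The `k`-th compound matrix of `A`: its `k × k` minors, indexed by the `k`-element subsets of
rows and columns. It is the matrix of the `k`-th exterior power of `A`. -/
def compoundMatrix (k : ℕ) (A : Matrix I I R) :
    Matrix (Set.powersetCard I k) (Set.powersetCard I k) R :=
  fun s t ↦ (A.submatrix (Set.powersetCard.ofFinEmbEquiv.symm s)
    (Set.powersetCard.ofFinEmbEquiv.symm t)).det

lemma compoundMatrix_transpose (k : ℕ) (A : Matrix I I R) :
    compoundMatrix k Aᵀ = (compoundMatrix k A)ᵀ := by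
  ext s t
  exact det_transpose _

lemma image_ofFinEmbEquiv_symm {k : ℕ} (s : Set.powersetCard I k) :
    univ.image (Set.powersetCard.ofFinEmbEquiv.symm s) = (s : Finset I) := by
  ext i
  rw [Set.powersetCard.mem_coe_iff, ← Set.powersetCard.mem_range_ofFinEmbEquiv_symm_iff_mem]
  simp

lemma compoundMatrix_diagonal_apply_self (k : ℕ) (d : I → R) (s : Set.powersetCard I k) :
    compoundMatrix k (diagonal d) s s = ∏ i ∈ (s : Finset I), d i := by
  have inj := (Set.powersetCard.ofFinEmbEquiv.symm s).injective
  rw [compoundMatrix, submatrix_diagonal _ _ inj, det_diagonal,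
    ← image_ofFinEmbEquiv_symm, prod_image inj.injOn]
  rfl

lemma compoundMatrix_eq_toMatrix_exteriorPower_map [Fintype I] (k : ℕ) (A : Matrix I I R) :
    compoundMatrix k A = LinearMap.toMatrix ((Pi.basisFun R I).exteriorPower k)
      ((Pi.basisFun R I).exteriorPower k) (exteriorPower.map k (toLin' A)) := by
  ext s t
  rw [LinearMap.toMatrix_apply, exteriorPower.basis_repr_apply, exteriorPower.basis_apply,
    exteriorPower.ιMulti_family, exteriorPower.map_apply_ιMulti,
    exteriorPower.ιMultiDual_apply_ιMulti, compoundMatrix, ← det_transpose]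
  congr 1
  ext i j
  simp

lemma compoundMatrix_mul [Fintype I] (k : ℕ) (A B : Matrix I I R) :
    compoundMatrix k (A * B) = compoundMatrix k A * compoundMatrix k B := by
  simp only [compoundMatrix_eq_toMatrix_exteriorPower_map, ← LinearMap.toMatrix_mul, toLin'_mul]
  exact congrArg _ (exteriorPower.map_comp (n := k) (toLin' B) (toLin' A))

lemma compoundMatrix_one [Finite I] (k : ℕ) : compoundMatrix k (1 : Matrix I I R) = 1 := by
  cases nonempty_fintype I
  rw [compoundMatrix_eq_toMatrix_exteriorPower_map, toLin'_one, exteriorPower.map_id,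
    LinearMap.toMatrix_id]

lemma compoundMatrix_pow [Fintype I] (k : ℕ) (A : Matrix I I R) (p : ℕ) :
    compoundMatrix k (A ^ p) = compoundMatrix k A ^ p := by
  induction p with
  | zero => simp [compoundMatrix_one]
  | succ p ih => rw [pow_succ, compoundMatrix_mul, ih, pow_succ]

lemma trace_compoundMatrix_pow_of_mul_eq_mul_diagonal [Fintype I] {C W : Matrix I I R} {d : I → R}
    (hW : IsUnit W.det) (hCW : C * W = W * diagonal d) (k p : ℕ) :
    (compoundMatrix k C ^ p).trace =
      ∑ s : Set.powersetCard I k, ∏ i ∈ (s : Finset I), d i ^ p := by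
  have hC : C ^ p = W * diagonal (d ^ p) * W⁻¹ := by
    have hpow : C ^ p * W = W * diagonal d ^ p :=
      (SemiconjBy.pow_right (show SemiconjBy W (diagonal d) C from hCW.symm) p).symm
    rw [← diagonal_pow, ← hpow, Matrix.mul_assoc, mul_nonsing_inv W hW, Matrix.mul_one]
  rw [← compoundMatrix_pow, hC, compoundMatrix_mul, compoundMatrix_mul, trace_mul_cycle,
    ← compoundMatrix_mul, nonsing_inv_mul W hW, compoundMatrix_one, Matrix.one_mul, Matrix.trace]
  exact sum_congr rfl fun s _ ↦ compoundMatrix_diagonal_apply_self k _ s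

end Compound

/-! ### Dimer coverings of a row as hopping particles -/

/-- Exactly one of four propositions holds. -/
def ExactlyOne (p q r s : Prop) : Prop :=
  (p ∧ ¬q ∧ ¬r ∧ ¬s) ∨ (¬p ∧ q ∧ ¬r ∧ ¬s) ∨ (¬p ∧ ¬q ∧ r ∧ ¬s) ∨ (¬p ∧ ¬q ∧ ¬r ∧ s)

instance (p q r s : Prop) [Decidable p] [Decidable q] [Decidable r] [Decidable s] :
    Decidable (ExactlyOne p q r s) :=
  inferInstanceAs (Decidable (_ ∨ _))

section DimerRows

variable {α : Type*} [AddGroup α] [One α] {E : Finset α}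

/-- A row of vertices indexed by the cyclic group `α` is covered exactly once by the vertical
dimers entering it from one side at the columns `S`, those entering from the other side at the
columns `S'`, and the horizontal dimers `{j, j + 1}` with `j ∈ h`. -/
def IsRowCovering (S S' h : Finset α) : Prop :=
  ∀ j, ExactlyOne (j ∈ S) (j ∈ S') (j ∈ h) (j - 1 ∈ h)

instance [Fintype α] [DecidableEq α] (S S' h : Finset α) : Decidable (IsRowCovering S S' h) :=
  inferInstanceAs (Decidable (∀ _, _))

lemma IsRowCovering.symm {S S' h : Finset α} (hS : IsRowCovering S S' h) :
    IsRowCovering S' S h := by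
  intro j
  have := hS j
  unfold ExactlyOne at *
  tauto

/-- The moves of a particle from column `a` to column `b`: on the columns `E`, meant to be the even
ones, a particle may stay or jump to a neighbouring column, elsewhere it stays. -/
def HopsTo (E : Finset α) (a b : α) : Prop :=
  b = a ∨ a ∈ E ∧ (b = a + 1 ∨ b = a - 1)

instance [DecidableEq α] (E : Finset α) (a b : α) : Decidable (HopsTo E a b) :=
  inferInstanceAs (Decidable (_ ∨ _))

lemma sub_one_mem_iff_notMem (hE : ∀ j, j + 1 ∈ E ↔ j ∉ E) (j : α) : j - 1 ∈ E ↔ j ∉ E := by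
  have := hE (j - 1)
  grind [sub_add_cancel]

variable [DecidableEq α]

/-- The new position of a particle at column `j`: particles on the columns `E` are carried along the
horizontal dimers `h`. -/
def hop (E h : Finset α) (j : α) : α :=
  if j ∈ E ∧ j ∈ h then j + 1 else if j ∈ E ∧ j - 1 ∈ h then j - 1 else j

lemma hopsTo_hop (E h : Finset α) (j : α) : HopsTo E j (hop E h j) := by
  unfold HopsTo hop
  grind

lemma eq_of_hop_eq_of_mem (hE : ∀ j, j + 1 ∈ E ↔ j ∉ E) {h : Finset α} {i j : α} (hj : j ∈ E)
    (hij : hop E h i = j) : i = j := by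
  have := hE i
  have := sub_one_mem_iff_notMem hE i
  unfold hop at hij
  grind

lemma eq_or_of_hop_eq {h : Finset α} {i j : α} (hij : hop E h i = j) :
    i = j ∨ (i = j + 1 ∧ j ∈ h) ∨ (i = j - 1 ∧ j - 1 ∈ h) := by
  unfold hop at hij
  grind [add_sub_cancel_right, sub_add_cancel]

variable [Fintype α] {X Y h : Finset α}

lemma isRowCovering_symmDiff_iff :
    IsRowCovering (X ∆ E) (Y ∆ Eᶜ) h ↔
      ∀ j, ExactlyOne (¬(j ∈ X ↔ j ∈ E)) (j ∈ Y ↔ j ∈ E) (j ∈ h) (j - 1 ∈ h) := by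
  refine forall_congr' fun j ↦ ?_
  congr! 1 <;> simp only [mem_symmDiff, mem_compl] <;> tauto

lemma exactlyOne_of_mem (hc : IsRowCovering (X ∆ E) (Y ∆ Eᶜ) h) {j : α} (hj : j ∈ E) :
    ExactlyOne (j ∉ X) (j ∈ Y) (j ∈ h) (j - 1 ∈ h) := by
  simpa only [hj, iff_true] using isRowCovering_symmDiff_iff.1 hc j

lemma exactlyOne_of_notMem (hc : IsRowCovering (X ∆ E) (Y ∆ Eᶜ) h) {j : α} (hj : j ∉ E) :
    ExactlyOne (j ∈ X) (j ∉ Y) (j ∈ h) (j - 1 ∈ h) := by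
  simpa only [hj, iff_false, not_not] using isRowCovering_symmDiff_iff.1 hc j

lemma hop_mem (hE : ∀ j, j + 1 ∈ E ↔ j ∉ E) (hc : IsRowCovering (X ∆ E) (Y ∆ Eᶜ) h) {j : α}
    (hj : j ∈ X) : hop E h j ∈ Y := by
  by_cases hjE : j ∈ E
  · have := exactlyOne_of_mem hc hjE
    have := exactlyOne_of_notMem hc (j := j + 1) (by simpa [hE] using hjE)
    have := exactlyOne_of_notMem hc (j := j - 1) (by simpa [sub_one_mem_iff_notMem hE] using hjE)
    rw [add_sub_cancel_right] at *
    unfold hop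
    grind [ExactlyOne]
  · have := exactlyOne_of_notMem hc hjE
    simp only [hop, hjE, false_and, if_false]
    grind [ExactlyOne]

lemma hop_injOn (hE : ∀ j, j + 1 ∈ E ↔ j ∉ E) (hc : IsRowCovering (X ∆ E) (Y ∆ Eᶜ) h) :
    Set.InjOn (hop E h) X := by
  intro i hi j hj hij
  rw [mem_coe] at hi hj
  by_cases hE' : hop E h j ∈ E
  · rw [eq_of_hop_eq_of_mem hE hE' hij, ← eq_of_hop_eq_of_mem hE hE' rfl]
  · have := exactlyOne_of_notMem hc hE'
    have := eq_or_of_hop_eq hij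
    have := eq_or_of_hop_eq (rfl : hop E h j = _)
    grind [ExactlyOne]

lemma exists_hop_eq (hE : ∀ j, j + 1 ∈ E ↔ j ∉ E) (hc : IsRowCovering (X ∆ E) (Y ∆ Eᶜ) h) {j : α}
    (hj : j ∈ Y) : ∃ i ∈ X, hop E h i = j := by
  unfold hop
  by_cases hjE : j ∈ E
  · have := exactlyOne_of_mem hc hjE
    exact ⟨j, by grind [ExactlyOne]⟩
  · have right := exactlyOne_of_mem hc ((hE j).2 hjE)
    have left := exactlyOne_of_mem hc ((sub_one_mem_iff_notMem hE j).2 hjE)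
    have : j ∈ X ∨ j ∈ h ∨ j - 1 ∈ h := by grind [ExactlyOne, exactlyOne_of_notMem hc hjE]
    rcases this with hjX | hjh | hjh
    · exact ⟨j, hjX, by simp [hjE]⟩
    · exact ⟨j + 1, by grind [ExactlyOne, add_sub_cancel_right]⟩
    · exact ⟨j - 1, by grind [ExactlyOne, sub_add_cancel, sub_one_mem_iff_notMem hE j]⟩

lemma card_eq_card_of_isRowCovering (hE : ∀ j, j + 1 ∈ E ↔ j ∉ E)
    (hc : IsRowCovering (X ∆ E) (Y ∆ Eᶜ) h) : #X = #Y :=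
  card_nbij (hop E h) (fun _ ↦ hop_mem hE hc) (hop_injOn hE hc) fun _ ↦ exists_hop_eq hE hc

variable {ι : Type*} [Fintype ι] {x z : ι → α}

/-- The horizontal dimers along which labelled particles jump from the columns `x` to the
columns `z`. -/
def hopDimers (E : Finset α) (x z : ι → α) : Finset α :=
  {j | ∃ i, j ∈ E ∧ x i = j ∧ z i = j + 1 ∨ j ∉ E ∧ x i = j + 1 ∧ z i = j}

lemma mem_hopDimers_of_mem {j : α} (hj : j ∈ E) :
    j ∈ hopDimers E x z ↔ ∃ i, x i = j ∧ z i = j + 1 := by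
  simp [hopDimers, hj]

lemma mem_hopDimers_of_notMem {j : α} (hj : j ∉ E) :
    j ∈ hopDimers E x z ↔ ∃ i, x i = j + 1 ∧ z i = j := by
  simp [hopDimers, hj]

lemma hopDimers_hop (hE : ∀ j, j + 1 ∈ E ↔ j ∉ E) (hne : ∀ j : α, j + 1 ≠ j - 1)
    (hc : IsRowCovering (univ.image x ∆ E) (Y ∆ Eᶜ) h) :
    hopDimers E x (fun i ↦ hop E h (x i)) = h := by
  ext j
  by_cases hj : j ∈ E
  · have := exactlyOne_of_mem hc hj
    have := hne j
    rw [mem_hopDimers_of_mem hj]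
    unfold hop
    grind [ExactlyOne]
  · have hj' := (hE j).2 hj
    have := exactlyOne_of_mem hc hj'
    have := hne (j + 1)
    rw [mem_hopDimers_of_notMem hj]
    unfold hop
    grind [ExactlyOne, add_sub_cancel_right]

lemma hop_hopDimers (hE : ∀ j, j + 1 ∈ E ↔ j ∉ E) (hx : Function.Injective x)
    (hxz : ∀ i, HopsTo E (x i) (z i)) (i : ι) : hop E (hopDimers E x z) (x i) = z i := by
  have mem_right (hi : x i ∈ E) : x i ∈ hopDimers E x z ↔ z i = x i + 1 := by
    simp [mem_hopDimers_of_mem hi, hx.eq_iff]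
  have mem_left (hi : x i ∈ E) : x i - 1 ∈ hopDimers E x z ↔ z i = x i - 1 := by
    have hi' : x i - 1 ∉ E := by simpa [sub_one_mem_iff_notMem hE]
    simp [mem_hopDimers_of_notMem hi', hx.eq_iff]
  have := hxz i
  unfold HopsTo at this
  unfold hop
  grind

lemma exactlyOne_hopDimers_of_mem (hE : ∀ j, j + 1 ∈ E ↔ j ∉ E) (hne : ∀ j : α, j + 1 ≠ j - 1)
    (hx : Function.Injective x) (hxz : ∀ i, HopsTo E (x i) (z i)) {j : α} (hj : j ∈ E) :
    ExactlyOne (¬∃ i, x i = j) (∃ i, z i = j) (j ∈ hopDimers E x z) (j - 1 ∈ hopDimers E x z) := by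
  have hsucc : j + 1 ∉ E := by simpa [hE]
  have hpred : j - 1 ∉ E := by simpa [sub_one_mem_iff_notMem hE]
  have mem_target : (∃ i, z i = j) ↔ ∃ i, x i = j ∧ z i = j := by
    refine exists_congr fun i ↦ ?_
    have := hE (x i)
    have := sub_one_mem_iff_notMem hE (x i)
    have := hxz i
    unfold HopsTo at this
    grind
  rw [mem_target, mem_hopDimers_of_mem hj, mem_hopDimers_of_notMem hpred, sub_add_cancel]
  by_cases hjx : ∃ i, x i = j
  · obtain ⟨i, rfl⟩ := hjx
    have := hxz i
    have := hne (x i)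
    simp only [hx.eq_iff, exists_eq_left, exists_eq]
    unfold HopsTo at *
    unfold ExactlyOne
    clear hE hne hxz
    grind
  · push Not at hjx
    simp [ExactlyOne, hjx]

lemma exactlyOne_hopDimers_of_notMem (hE : ∀ j, j + 1 ∈ E ↔ j ∉ E)
    (hne : ∀ j : α, j + 1 ≠ j - 1) (hz : Function.Injective z)
    (hxz : ∀ i, HopsTo E (x i) (z i)) {j : α} (hj : j ∉ E) :
    ExactlyOne (∃ i, x i = j) (¬∃ i, z i = j) (j ∈ hopDimers E x z) (j - 1 ∈ hopDimers E x z) := by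
  have hsucc : j + 1 ∈ E := by simpa [hE]
  have hpred : j - 1 ∈ E := by simpa [sub_one_mem_iff_notMem hE]
  have mem_source : (∃ i, x i = j) ↔ ∃ i, x i = j ∧ z i = j := by
    refine exists_congr fun i ↦ ?_
    have := hxz i
    unfold HopsTo at this
    grind
  rw [mem_source, mem_hopDimers_of_notMem hj, mem_hopDimers_of_mem hpred, sub_add_cancel]
  by_cases hjz : ∃ i, z i = j
  · obtain ⟨i, rfl⟩ := hjz
    have : x i = z i ∨ x i = z i - 1 ∨ x i = z i + 1 := by
      rcases hxz i with h | ⟨-, h | h⟩ <;> simp [h]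
    have := hne (z i)
    simp only [hz.eq_iff, exists_eq_right, exists_eq]
    unfold ExactlyOne
    clear hE hne hxz
    grind
  · push Not at hjz
    simp [ExactlyOne, hjz]

lemma isRowCovering_hopDimers (hE : ∀ j, j + 1 ∈ E ↔ j ∉ E) (hne : ∀ j : α, j + 1 ≠ j - 1)
    (hx : Function.Injective x) (hz : Function.Injective z) (hxz : ∀ i, HopsTo E (x i) (z i)) :
    IsRowCovering (univ.image x ∆ E) (univ.image z ∆ Eᶜ) (hopDimers E x z) := by
  refine isRowCovering_symmDiff_iff.2 fun j ↦ ?_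
  by_cases hj : j ∈ E
  · simpa [hj] using exactlyOne_hopDimers_of_mem hE hne hx hxz hj
  · simpa [hj] using exactlyOne_hopDimers_of_notMem hE hne hz hxz hj

theorem card_isRowCovering [DecidableEq ι] {y : ι → α} (hE : ∀ j, j + 1 ∈ E ↔ j ∉ E)
    (hne : ∀ j : α, j + 1 ≠ j - 1) (hx : Function.Injective x) (hy : Function.Injective y) :
    #{h | IsRowCovering (univ.image x ∆ E) (univ.image y ∆ Eᶜ) h} =
      #{σ : Equiv.Perm ι | ∀ i, HopsTo E (x i) (y (σ i))} := by
  symm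
  refine card_bij (fun σ _ ↦ hopDimers E x (y ∘ σ)) ?_ ?_ ?_
  · intro σ hσ
    rw [mem_filter_univ] at hσ ⊢
    have image_comp : univ.image (y ∘ σ) = univ.image y := by
      rw [← image_image, image_univ_equiv]
    rw [← image_comp]
    exact isRowCovering_hopDimers hE hne hx (hy.comp σ.injective) hσ
  · intro σ hσ τ hτ hστ
    rw [mem_filter_univ] at hσ hτ
    refine Equiv.ext fun i ↦ hy ?_
    calc y (σ i) = hop E (hopDimers E x (y ∘ σ)) (x i) := (hop_hopDimers hE hx hσ i).symm
      _ = hop E (hopDimers E x (y ∘ τ)) (x i) := by rw [hστ]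
      _ = y (τ i) := hop_hopDimers hE hx hτ i
  · intro h hh
    rw [mem_filter_univ] at hh
    have mem (i : ι) : ∃ j, y j = hop E h (x i) := by
      simpa using hop_mem hE hh (mem_image_of_mem x (mem_univ i))
    choose σ hσ using mem
    have hσinj : Function.Injective σ := fun i j hij ↦
      hx (hop_injOn hE hh (by simp) (by simp) (by rw [← hσ, ← hσ, hij]))
    refine ⟨Equiv.ofBijective σ (Finite.injective_iff_bijective.1 hσinj), ?_, ?_⟩
    · simpa [hσ] using fun i ↦ hopsTo_hop E h (x i)
    · rw [← hopDimers_hop hE hne hh]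
      congr 1
      exact funext hσ

end DimerRows

section DimerTransfer

variable (R : Type*) [CommRing R]

/-- The row transfer matrix of the dimer model on a cylinder with columns `α`: the `(S, S')` entry
counts the sets of horizontal dimers completing vertical dimers at `S` on one side and `S'` on the
other side to a covering of the row. -/
def dimerTransfer (α : Type*) [AddGroup α] [One α] [Fintype α] [DecidableEq α] :
    Matrix (Finset α) (Finset α) R :=
  fun S S' ↦ #{h | IsRowCovering S S' h}

lemma dimerTransfer_transpose (α : Type*) [AddGroup α] [One α] [Fintype α] [DecidableEq α] :
    (dimerTransfer R α)ᵀ = dimerTransfer R α := by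
  ext S S'
  simp only [transpose_apply, dimerTransfer]
  congr 3
  ext h
  exact ⟨IsRowCovering.symm, IsRowCovering.symm⟩

variable {n : ℕ} [NeZero n]

lemma val_fin_add_one_eq_ite (j : Fin n) :
    (j + 1).val = if j.val + 1 = n then 0 else j.val + 1 := by
  obtain ⟨k, rfl⟩ := Nat.exists_eq_succ_of_ne_zero (NeZero.ne n)
  simp [Fin.val_add_one, Fin.ext_iff]

lemma val_fin_sub_one_eq_ite (j : Fin n) :
    (j - 1).val = if j.val = 0 then n - 1 else j.val - 1 := by
  have := val_fin_add_one_eq_ite (j - 1)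
  rw [sub_add_cancel] at this
  grind

variable (n) in
/-- The columns of one of the two colours of the bipartite cycle of length `n`. -/
def evenColumns : Finset (Fin n) := {j | Even j.val}

lemma add_one_mem_evenColumns_iff (hn : Even n) (j : Fin n) :
    j + 1 ∈ evenColumns n ↔ j ∉ evenColumns n := by
  simp only [evenColumns, mem_filter_univ, val_fin_add_one_eq_ite]
  grind

lemma fin_add_one_ne_sub_one (hn : 2 < n) (j : Fin n) : j + 1 ≠ j - 1 := by
  rw [Ne, Fin.ext_iff, val_fin_add_one_eq_ite, val_fin_sub_one_eq_ite]
  grind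

lemma hopsTo_evenColumns_iff (a b : Fin n) :
    HopsTo (evenColumns n) a b ↔ b.val = a.val ∨ Even a.val ∧
      (b.val = (if a.val + 1 = n then 0 else a.val + 1) ∨
        b.val = if a.val = 0 then n - 1 else a.val - 1) := by
  simp only [HopsTo, evenColumns, mem_filter_univ, Fin.ext_iff, val_fin_add_one_eq_ite,
    val_fin_sub_one_eq_ite]

lemma lt_of_hopsTo_of_lt (hn : Even n) {a b a' b' : Fin n} (hab : HopsTo (evenColumns n) a b)
    (hab' : HopsTo (evenColumns n) a' b') (hlt : a < a') (hne : b ≠ b')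
    (hwrap : ¬(a.val = 0 ∧ b.val + 1 = n)) : b < b' := by
  rw [hopsTo_evenColumns_iff] at hab hab'
  rw [Nat.even_iff] at *
  rw [Fin.lt_def] at *
  rw [Ne, Fin.ext_iff] at hne
  split_ifs at * <;> omega

section Sign

variable {k : ℕ} {x y : Fin k ↪o Fin n} {σ : Equiv.Perm (Fin k)}

lemma perm_eq_one_of_no_wrap (hn : Even n) (hσ : ∀ i, HopsTo (evenColumns n) (x i) (y (σ i)))
    (hwrap : ∀ i, ¬((x i).val = 0 ∧ (y (σ i)).val + 1 = n)) : σ = 1 := by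
  have mono : StrictMono σ := fun i j hij ↦ y.lt_iff_lt.1 <|
    lt_of_hopsTo_of_lt hn (hσ i) (hσ j) (x.strictMono hij)
      ((y.injective.comp σ.injective).ne hij.ne) (hwrap i)
  exact Equiv.ext (congrFun mono.eq_id)

lemma sign_of_wrap (hn : Even n) {x y : Fin (k + 1) ↪o Fin n} {σ : Equiv.Perm (Fin (k + 1))}
    (hσ : ∀ i, HopsTo (evenColumns n) (x i) (y (σ i)))
    (hx : (x 0).val = 0) (hy : (y (σ 0)).val + 1 = n) : Equiv.Perm.sign σ = (-1) ^ k := by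
  have mono : StrictMono (σ * finRotate (k + 1)) := by
    intro i j hij
    have hne : y (σ (finRotate _ i)) ≠ y (σ (finRotate _ j)) :=
      (y.injective.comp (σ * finRotate (k + 1)).injective).ne hij.ne
    refine y.lt_iff_lt.1 (show y (σ (finRotate _ i)) < y (σ (finRotate _ j)) from ?_)
    cases j using Fin.lastCases with
    | last =>
      rw [finRotate_last] at hne ⊢
      grind
    | cast j =>
      cases i using Fin.lastCases with
      | last => exact absurd hij (Fin.le_last _).not_gt
      | cast i =>
        simp only [finRotate_apply, Fin.coeSucc_eq_succ] at hne ⊢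
        have pos : x 0 < x i.succ := x.strictMono i.succ_pos
        exact lt_of_hopsTo_of_lt hn (hσ _) (hσ _) (x.strictMono (by simpa using hij)) hne
          fun h ↦ by grind
  have hrotate : σ * finRotate (k + 1) = 1 := Equiv.ext (congrFun mono.eq_id)
  rw [mul_eq_one_iff_eq_inv.1 hrotate, Equiv.Perm.sign_inv, sign_finRotate, Nat.add_sub_cancel]

end Sign

variable {R}

/-- The one-particle transfer matrix of the hopping particles, where a jump from column `0` to
column `n - 1` has weight `ε`. -/
def hopMatrix (n : ℕ) [NeZero n] (ε : R) : Matrix (Fin n) (Fin n) R :=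
  fun b a ↦ if HopsTo (evenColumns n) a b then if a.val = 0 ∧ b.val + 1 = n then ε else 1 else 0

lemma hopMatrix_eq_zero {ε : R} {a b : Fin n} (h : ¬HopsTo (evenColumns n) a b) :
    hopMatrix n ε b a = 0 :=
  if_neg h

/-- A particle jumping across the boundary rotates the order of the `k` particles; the twist
`(-1) ^ (k + 1)` compensates the sign of this rotation. -/
lemma sign_mul_prod_hopMatrix_eq_one (hn : Even n) {k : ℕ} {x y : Fin k ↪o Fin n}
    {σ : Equiv.Perm (Fin k)} (hσ : ∀ i, HopsTo (evenColumns n) (x i) (y (σ i))) :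
    (Equiv.Perm.sign σ : ℤ) * ∏ i, hopMatrix n ((-1 : R) ^ (k + 1)) (y (σ i)) (x i) = 1 := by
  simp only [hopMatrix, hσ, if_true]
  by_cases hwrap : ∃ i, (x i).val = 0 ∧ (y (σ i)).val + 1 = n
  · obtain ⟨i, hx, hy⟩ := hwrap
    obtain ⟨k, rfl⟩ := Nat.exists_eq_succ_of_ne_zero i.pos.ne'
    obtain rfl : i = 0 := by
      by_contra hi
      have := x.strictMono (Fin.pos_iff_ne_zero.2 hi)
      grind
    rw [Fin.prod_univ_succ, if_pos ⟨hx, hy⟩, prod_eq_one, sign_of_wrap hn hσ hx hy]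
    · simp [pow_succ, ← mul_pow]
    · intro i _
      have := x.strictMono i.succ_pos
      exact if_neg fun h ↦ by grind
  · push Not at hwrap
    rw [prod_eq_one fun i _ ↦ if_neg fun h ↦ hwrap i h.1 h.2,
      perm_eq_one_of_no_wrap hn hσ fun i h ↦ hwrap i h.1 h.2]
    simp

theorem dimerTransfer_symmDiff_eq_compoundMatrix (hn : Even n) (hn' : 2 < n) {k : ℕ}
    (X Y : Set.powersetCard (Fin n) k) :
    dimerTransfer R (Fin n) (X ∆ evenColumns n) (Y ∆ (evenColumns n)ᶜ) =
      compoundMatrix k (hopMatrix n ((-1) ^ (k + 1))) Y X := by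
  rw [dimerTransfer, ← image_ofFinEmbEquiv_symm X, ← image_ofFinEmbEquiv_symm Y,
    card_isRowCovering (add_one_mem_evenColumns_iff hn) (fin_add_one_ne_sub_one hn')
      (RelEmbedding.injective _) (RelEmbedding.injective _), compoundMatrix, det_apply',
    card_filter, Nat.cast_sum]
  refine sum_congr rfl fun σ _ ↦ ?_
  simp only [submatrix_apply]
  split_ifs with hσ
  · rw [sign_mul_prod_hopMatrix_eq_one hn hσ, Nat.cast_one]
  · push Not at hσ
    obtain ⟨i, hi⟩ := hσ
    rw [prod_eq_zero (mem_univ i) (hopMatrix_eq_zero hi), mul_zero, Nat.cast_zero]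

lemma dimerTransfer_symmDiff_eq_zero (hn : Even n) {X Y : Finset (Fin n)} (hXY : #X ≠ #Y) :
    dimerTransfer R (Fin n) (X ∆ evenColumns n) (Y ∆ (evenColumns n)ᶜ) = 0 := by
  have : #{h | IsRowCovering (X ∆ evenColumns n) (Y ∆ (evenColumns n)ᶜ) h} = 0 :=
    card_eq_zero.2 <| filter_eq_empty_iff.2 fun _ _ hc ↦
      hXY (card_eq_card_of_isRowCovering (add_one_mem_evenColumns_iff hn) hc)
  rw [dimerTransfer, this, Nat.cast_zero]

end DimerTransfer

/-! ### Spectrum of the one-particle transfer matrix -/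

section PlaneWaves

variable {n : ℕ} [NeZero n]

lemma sub_one_mem_evenColumns_iff (hn : Even n) (j : Fin n) :
    j - 1 ∈ evenColumns n ↔ j ∉ evenColumns n := by
  have := add_one_mem_evenColumns_iff hn (j - 1)
  rw [sub_add_cancel] at this
  tauto

lemma val_add_one_ne_zero_of_mem_evenColumns (hn : Even n) {j : Fin n} (hj : j ∈ evenColumns n) :
    (j + 1).val ≠ 0 := fun h ↦
  (add_one_mem_evenColumns_iff hn j).1 (by simp [evenColumns, h]) hj

lemma hopMatrix_apply {R : Type*} [CommRing R] (hn : Even n) (hn' : 2 < n) (ε : R) (b a : Fin n) :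
    hopMatrix n ε b a = (if a = b then 1 else 0) +
      (if a = b - 1 then if a ∈ evenColumns n then 1 else 0 else 0) +
      (if a = b + 1 then if a ∈ evenColumns n then if a.val = 0 then ε else 1 else 0 else 0) := by
  have := a.2
  have := b.2
  simp only [hopMatrix, hopsTo_evenColumns_iff]
  simp only [evenColumns, mem_filter_univ, Fin.ext_iff,
    val_fin_add_one_eq_ite, val_fin_sub_one_eq_ite, Nat.even_iff] at hn ⊢
  split_ifs <;> first | omega | simp

lemma hopMatrix_mulVec {R : Type*} [CommRing R] (hn : Even n) (hn' : 2 < n) (ε : R)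
    (f : Fin n → R) (b : Fin n) :
    (hopMatrix n ε *ᵥ f) b = f b + if b ∈ evenColumns n then 0 else
      f (b - 1) + (if (b + 1).val = 0 then ε else 1) * f (b + 1) := by
  simp only [mulVec, dotProduct, hopMatrix_apply hn hn', add_mul, sum_add_distrib, ite_mul,
    zero_mul, one_mul, sum_ite_eq', mem_univ, if_true, sub_one_mem_evenColumns_iff hn,
    add_one_mem_evenColumns_iff hn]
  split_ifs <;> simp_all [add_assoc]

lemma transpose_hopMatrix_mulVec {R : Type*} [CommRing R] (hn : Even n) (hn' : 2 < n) (ε : R)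
    (f : Fin n → R) (a : Fin n) :
    ((hopMatrix n ε)ᵀ *ᵥ f) a = f a + if a ∈ evenColumns n then
      f (a + 1) + (if a.val = 0 then ε else 1) * f (a - 1) else 0 := by
  have eq_sub_one (b : Fin n) : a = b - 1 ↔ b = a + 1 := by rw [eq_sub_iff_add_eq, eq_comm]
  have eq_add_one (b : Fin n) : a = b + 1 ↔ b = a - 1 := by rw [eq_sub_iff_add_eq, eq_comm]
  simp only [mulVec, dotProduct, transpose_apply, hopMatrix_apply hn hn', add_mul,
    sum_add_distrib, ite_mul, zero_mul, one_mul, eq_sub_one, eq_add_one, sum_ite_eq, sum_ite_eq',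
    mem_univ, if_true]
  split_ifs <;> simp [add_assoc]

variable {K : Type*} [Field K] {z μ ε : K}

lemma twisted_pow_add_one (hz : z ^ n = ε) (j : Fin n) :
    (if (j + 1).val = 0 then ε else 1) * z ^ (j + 1).val = z ^ j.val * z := by
  rw [val_fin_add_one_eq_ite]
  by_cases hj : j.val + 1 = n
  · simp only [hj, if_true, pow_zero, mul_one, ← hz]
    rw [← pow_succ, hj]
  · simp [hj, pow_succ]

lemma twisted_pow_sub_one (hz : z ^ n = ε) (hz₀ : z ≠ 0) (hε : ε * ε = 1) (j : Fin n) :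
    (if j.val = 0 then ε else 1) * z ^ (j - 1).val = z ^ j.val * z⁻¹ := by
  have := twisted_pow_add_one hz (j - 1)
  rw [sub_add_cancel] at this
  rw [← mul_inv_eq_iff_eq_mul₀ hz₀] at this
  rw [← this]
  split_ifs
  · linear_combination z ^ j.val * z⁻¹ * hε
  · ring

lemma hopMatrix_mulVec_wave (hn : Even n) (hn' : 2 < n) (hz : z ^ n = ε) (hz₀ : z ≠ 0)
    (hε : ε * ε = 1) (hμ : μ ^ 2 = 1 + (z + z⁻¹) * μ) (b : Fin n) :
    (hopMatrix n ε *ᵥ fun j ↦ z ^ j.val * if j ∈ evenColumns n then μ else 1) b =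
      z ^ b.val * (if b ∈ evenColumns n then 1 else μ) * μ := by
  rw [hopMatrix_mulVec hn hn']
  simp only [add_one_mem_evenColumns_iff hn, sub_one_mem_evenColumns_iff hn]
  by_cases hb : b ∈ evenColumns n
  · simp [hb]
  · have hb₀ : b.val ≠ 0 := fun h ↦ hb (by simp [evenColumns, h])
    have left := twisted_pow_sub_one hz hz₀ hε b
    have right := twisted_pow_add_one hz b
    simp only [hb, hb₀, if_false, not_false_eq_true, if_true] at left right ⊢
    linear_combination μ * left + μ * right - z ^ b.val * hμ

lemma transpose_hopMatrix_mulVec_wave (hn : Even n) (hn' : 2 < n) (hz : z ^ n = ε) (hz₀ : z ≠ 0)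
    (hε : ε * ε = 1) (hμ : μ ^ 2 = 1 + (z + z⁻¹) * μ) (a : Fin n) :
    ((hopMatrix n ε)ᵀ *ᵥ fun j ↦ z ^ j.val * if j ∈ evenColumns n then 1 else μ) a =
      z ^ a.val * (if a ∈ evenColumns n then μ else 1) * μ := by
  rw [transpose_hopMatrix_mulVec hn hn']
  simp only [add_one_mem_evenColumns_iff hn, sub_one_mem_evenColumns_iff hn]
  by_cases ha : a ∈ evenColumns n
  · have left := twisted_pow_sub_one hz hz₀ hε a
    have right := twisted_pow_add_one hz a
    simp only [ha, val_add_one_ne_zero_of_mem_evenColumns hn ha, not_true, if_false, if_true]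
      at left right ⊢
    linear_combination μ * left + μ * right - z ^ a.val * hμ
  · simp [ha]

end PlaneWaves

section Momenta

/-- The `r`-th momentum on a cycle of length `n`, for periodic (`δ` even) or antiperiodic
(`δ` odd) boundary conditions. -/
noncomputable def momentum (n δ r : ℕ) : ℝ := (2 * r + δ) * Real.pi / n

/-- Half the logarithm of the eigenvalue of `Cᵀ * C` at the `r`-th momentum, where `C` is the
one-particle transfer matrix with boundary sign `(-1) ^ δ`. -/
noncomputable def energy (n δ r : ℕ) : ℝ := Real.arsinh (Real.cos (momentum n δ r))

/-- The phase acquired by the plane wave with the `r`-th momentum from one column to the next. -/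
noncomputable def phase (n δ r : ℕ) : ℂ := Complex.exp (momentum n δ r * Complex.I)

variable {n : ℕ} (δ : ℕ)

lemma phase_ne_zero (r : ℕ) : phase n δ r ≠ 0 := Complex.exp_ne_zero _

lemma phase_pow [NeZero n] (r : ℕ) : phase n δ r ^ n = (-1) ^ δ := by
  have hn : (n : ℂ) ≠ 0 := NeZero.ne _
  have : (n : ℂ) * (momentum n δ r * Complex.I) =
      r * (2 * Real.pi * Complex.I) + δ * (Real.pi * Complex.I) := by
    rw [momentum]
    push_cast
    field_simp
  rw [phase, ← Complex.exp_nat_mul, this, Complex.exp_add, Complex.exp_nat_mul_two_pi_mul_I,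
    one_mul, Complex.exp_nat_mul, Complex.exp_pi_mul_I]

lemma phase_add_inv (r : ℕ) :
    phase n δ r + (phase n δ r)⁻¹ = (2 * Real.cos (momentum n δ r) : ℝ) := by
  rw [phase, ← Complex.exp_neg, ← neg_mul, ← Complex.two_cos]
  push_cast
  rfl

lemma phase_injective [NeZero n] : Function.Injective fun r : Fin n ↦ phase n δ r := by
  have hn : (n : ℂ) ≠ 0 := NeZero.ne _
  have phase_eq (r : ℕ) : phase n δ r = Complex.exp (δ * Real.pi / n * Complex.I) *
      Complex.exp (2 * Real.pi * Complex.I / n) ^ r := by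
    rw [phase, ← Complex.exp_nat_mul, ← Complex.exp_add, momentum]
    congr 1
    push_cast
    field_simp
    ring
  intro r s hrs
  simp only [phase_eq] at hrs
  exact Fin.ext <| (Complex.isPrimitiveRoot_exp n (NeZero.ne n)).pow_inj r.2 s.2 <|
    mul_left_cancel₀ (Complex.exp_ne_zero _) hrs

lemma exp_arsinh_sq (x : ℝ) :
    Real.exp (Real.arsinh x) ^ 2 = 1 + 2 * x * Real.exp (Real.arsinh x) := by
  have sinh_eq := Real.sinh_arsinh x
  rw [Real.sinh_eq, Real.exp_neg] at sinh_eq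
  have := (Real.exp_pos (Real.arsinh x)).ne'
  field_simp at sinh_eq
  linear_combination sinh_eq

lemma exp_energy_sq (r : ℕ) : (Real.exp (energy n δ r) : ℂ) ^ 2 =
    1 + (phase n δ r + (phase n δ r)⁻¹) * Real.exp (energy n δ r) := by
  rw [phase_add_inv]
  exact_mod_cast exp_arsinh_sq _

lemma exp_energy_mul_exp_energy_of_phase_eq_neg {r s : ℕ} (h : phase n δ s = -phase n δ r) :
    (Real.exp (energy n δ r) : ℂ) * Real.exp (energy n δ s) = 1 := by
  have cos_eq : Real.cos (momentum n δ s) = -Real.cos (momentum n δ r) := by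
    have := congrArg₂ (· + ·) h (congrArg (·⁻¹) h)
    simp only [inv_neg, ← neg_add, phase_add_inv, ← Complex.ofReal_neg, Complex.ofReal_inj] at this
    linarith
  rw [← Complex.ofReal_mul, ← Real.exp_add, energy, energy, cos_eq, Real.arsinh_neg, add_neg_cancel,
    Real.exp_zero, Complex.ofReal_one]

/-- The matrix whose columns are the eigenvectors of `Cᵀ * C`, where `C` is the one-particle
transfer matrix with boundary sign `(-1) ^ δ`. -/
noncomputable def waveMatrix (n δ : ℕ) : Matrix (Fin n) (Fin n) ℂ :=
  fun j r ↦ phase n δ r ^ j.val * if j ∈ evenColumns n then (Real.exp (energy n δ r) : ℂ) else 1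

lemma transpose_hopMatrix_mul_hopMatrix_mul_waveMatrix [NeZero n] (hn : Even n) (hn' : 2 < n) :
    (hopMatrix n ((-1) ^ δ))ᵀ * hopMatrix n ((-1) ^ δ) * waveMatrix n δ =
      waveMatrix n δ * diagonal fun r : Fin n ↦ ((Real.exp (2 * energy n δ r) : ℝ) : ℂ) := by
  have hε : (-1 : ℂ) ^ δ * (-1) ^ δ = 1 := by simp [← mul_pow]
  ext j r
  set z := phase n δ r
  set μ : ℂ := ((Real.exp (energy n δ r) : ℝ) : ℂ) with hμ
  let w : Fin n → ℂ := fun j ↦ z ^ j.val * if j ∈ evenColumns n then μ else 1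
  let w' : Fin n → ℂ := fun j ↦ z ^ j.val * if j ∈ evenColumns n then 1 else μ
  have hop_w : hopMatrix n ((-1) ^ δ) *ᵥ w = μ • w' := funext fun b ↦
    (hopMatrix_mulVec_wave hn hn' (phase_pow δ r) (phase_ne_zero δ r) hε (exp_energy_sq δ r)
      b).trans (mul_comm _ _)
  have hop_w' : (hopMatrix n ((-1) ^ δ))ᵀ *ᵥ w' = μ • w := funext fun a ↦
    (transpose_hopMatrix_mulVec_wave hn hn' (phase_pow δ r) (phase_ne_zero δ r) hε
      (exp_energy_sq δ r) a).trans (mul_comm _ _)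
  calc _ = ((hopMatrix n ((-1) ^ δ))ᵀ *ᵥ (hopMatrix n ((-1) ^ δ) *ᵥ w)) j := by
        rw [mulVec_mulVec]; rfl
    _ = w j * μ ^ 2 := by
        rw [hop_w, mulVec_smul, hop_w', Pi.smul_apply, Pi.smul_apply, smul_eq_mul, smul_eq_mul]
        ring
    _ = _ := by
        rw [mul_diagonal, hμ, ← Complex.ofReal_pow, ← Real.exp_nat_mul, Nat.cast_ofNat]; rfl

lemma sum_range_alternating {R : Type*} [CommRing R] (q a : R) (h : ℕ) :
    ∑ j ∈ range (h + h), q ^ j * (if Even j then a else 1) =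
      (a + q) * ∑ l ∈ range h, (q ^ 2) ^ l := by
  induction h with
  | zero => simp
  | succ h ih =>
    rw [show h + 1 + (h + 1) = (h + h) + 1 + 1 by ring, sum_range_succ, sum_range_succ, ih,
      sum_range_succ, if_pos ⟨h, rfl⟩, if_neg (Nat.not_even_iff_odd.2 ⟨h, by ring⟩), ← pow_mul]
    ring

/-- The inverse of `waveMatrix n δ` up to a diagonal factor. -/
noncomputable def dualWaveMatrix (n δ : ℕ) : Matrix (Fin n) (Fin n) ℂ :=
  fun r j ↦ (phase n δ r)⁻¹ ^ j.val *
    if j ∈ evenColumns n then (Real.exp (energy n δ r) : ℂ) else 1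

lemma dualWaveMatrix_mul_waveMatrix_apply {h : ℕ} (r s : Fin (h + h)) :
    (dualWaveMatrix (h + h) δ * waveMatrix (h + h) δ) r s =
      (Real.exp (energy (h + h) δ r) * Real.exp (energy (h + h) δ s) +
        (phase (h + h) δ r)⁻¹ * phase (h + h) δ s) *
      ∑ l ∈ range h, (((phase (h + h) δ r)⁻¹ * phase (h + h) δ s) ^ 2) ^ l := by
  rw [← sum_range_alternating, ← Fin.sum_univ_eq_sum_range fun j ↦
    ((phase (h + h) δ r)⁻¹ * phase (h + h) δ s) ^ j * (if Even j then
      (Real.exp (energy (h + h) δ r) * Real.exp (energy (h + h) δ s) : ℂ) else 1), mul_apply]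
  refine sum_congr rfl fun j _ ↦ ?_
  simp only [dualWaveMatrix, waveMatrix, evenColumns, mem_filter_univ]
  split_ifs <;> ring

/-- Distinct phases with ratio `-1` are made orthogonal by their amplitudes, all others by the
geometric sum over columns of one colour. -/
lemma dualWaveMatrix_mul_waveMatrix_apply_of_ne {h : ℕ} {r s : Fin (h + h)} (hrs : r ≠ s) :
    (dualWaveMatrix (h + h) δ * waveMatrix (h + h) δ) r s = 0 := by
  have : NeZero (h + h) := ⟨r.pos.ne'⟩
  have hr := phase_ne_zero (n := h + h) δ r
  rw [dualWaveMatrix_mul_waveMatrix_apply]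
  set q := (phase (h + h) δ r)⁻¹ * phase (h + h) δ s with hq
  have phase_eq : phase (h + h) δ s = phase (h + h) δ r * q := by rw [hq, mul_inv_cancel_left₀ hr]
  by_cases hq2 : q ^ 2 = 1
  · rcases sq_eq_one_iff.1 hq2 with hq1 | hq1
    · exact absurd (phase_injective δ (by simp [phase_eq, hq1])) hrs
    · rw [exp_energy_mul_exp_energy_of_phase_eq_neg δ (by rw [phase_eq, hq1, mul_neg_one]), hq1,
        add_neg_cancel, zero_mul]
  · have pow_eq : (q ^ 2) ^ h = 1 := by
      rw [← pow_mul, two_mul, hq, mul_pow, inv_pow, phase_pow, phase_pow,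
        inv_mul_cancel₀ (pow_ne_zero _ (by norm_num))]
    rw [geom_sum_eq hq2, pow_eq, sub_self, zero_div, mul_zero]

lemma dualWaveMatrix_mul_waveMatrix (h : ℕ) :
    dualWaveMatrix (h + h) δ * waveMatrix (h + h) δ =
      diagonal fun r : Fin (h + h) ↦ (((Real.exp (energy (h + h) δ r) ^ 2 + 1) * h : ℝ) : ℂ) := by
  ext r s
  by_cases hrs : r = s
  · subst hrs
    rw [dualWaveMatrix_mul_waveMatrix_apply, inv_mul_cancel₀ (phase_ne_zero _ _),
      diagonal_apply_eq]
    simp [pow_two]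
  · rw [dualWaveMatrix_mul_waveMatrix_apply_of_ne δ hrs, diagonal_apply_ne _ hrs]

lemma isUnit_det_waveMatrix (hn : Even n) : IsUnit (waveMatrix n δ).det := by
  obtain ⟨h, rfl⟩ := hn
  have det_mul_det := congrArg det (dualWaveMatrix_mul_waveMatrix δ h)
  rw [det_mul, det_diagonal] at det_mul_det
  refine isUnit_iff_ne_zero.2 (right_ne_zero_of_mul (det_mul_det.trans_ne ?_))
  refine prod_ne_zero_iff.2 fun r _ ↦ ?_
  have : (h : ℝ) ≠ 0 := by have := r.pos; norm_cast; omega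
  norm_cast
  positivity

end Momenta

/-! ### The trace of the row transfer matrix -/

lemma trace_submatrix_equiv_pow {I J R : Type*} [Fintype I] [Fintype J] [DecidableEq I]
    [DecidableEq J] [CommSemiring R] (A : Matrix I I R) (e : J ≃ I) (p : ℕ) :
    (A.submatrix e e ^ p).trace = (A ^ p).trace :=
  calc _ = (reindexAlgEquiv R R e.symm (A ^ p)).trace := by rw [map_pow]; rfl
    _ = (A ^ p).trace := e.sum_comp fun i ↦ (A ^ p) i i

/-- Finsets of a finite type sorted by their cardinality. -/
def sigmaPowersetCardEquiv (I : Type*) [Fintype I] :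
    (Σ k : Fin (Fintype.card I + 1), Set.powersetCard I k) ≃ Finset I where
  toFun s := s.2
  invFun s := ⟨⟨#s, Nat.lt_succ_of_le s.card_le_univ⟩, s, rfl⟩
  left_inv := by
    rintro ⟨⟨k, hk⟩, s, hs⟩
    obtain rfl : #s = k := hs
    rfl
  right_inv _ := rfl

/-- Finsets of a finite type sorted by the cardinality of their symmetric difference with `E`. -/
def sigmaSymmDiffEquiv {I : Type*} [Fintype I] [DecidableEq I] (E : Finset I) :
    (Σ k : Fin (Fintype.card I + 1), Set.powersetCard I k) ≃ Finset I :=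
  (sigmaPowersetCardEquiv I).trans (symmDiff_left_involutive E).toPerm

section TraceFormula

variable {n : ℕ} [NeZero n]

lemma dimerTransfer_submatrix_eq_blockDiagonal' {R : Type*} [CommRing R] (hn : Even n)
    (hn' : 2 < n) :
    (dimerTransfer R (Fin n)).submatrix (sigmaSymmDiffEquiv (evenColumns n))
        (sigmaSymmDiffEquiv (evenColumns n)ᶜ) =
      blockDiagonal' fun k : Fin (Fintype.card (Fin n) + 1) ↦
        (compoundMatrix k (hopMatrix n ((-1) ^ ((k : ℕ) + 1))))ᵀ := by
  ext ⟨k, X⟩ ⟨l, Y⟩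
  rw [blockDiagonal'_apply]
  by_cases hkl : k = l
  · subst hkl
    rw [dif_pos rfl]
    exact dimerTransfer_symmDiff_eq_compoundMatrix hn hn' X Y
  · rw [dif_neg hkl]
    refine dimerTransfer_symmDiff_eq_zero hn fun hcard ↦ hkl (Fin.ext ?_)
    exact X.2.symm.trans (hcard.trans Y.2)

lemma dimerTransfer_sq_submatrix_eq_blockDiagonal' {R : Type*} [CommRing R] (hn : Even n)
    (hn' : 2 < n) :
    (dimerTransfer R (Fin n) ^ 2).submatrix (sigmaSymmDiffEquiv (evenColumns n))
        (sigmaSymmDiffEquiv (evenColumns n)) =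
      blockDiagonal' fun k : Fin (Fintype.card (Fin n) + 1) ↦ compoundMatrix k
        ((hopMatrix n ((-1) ^ ((k : ℕ) + 1)))ᵀ * hopMatrix n ((-1) ^ ((k : ℕ) + 1))) := by
  have block := dimerTransfer_submatrix_eq_blockDiagonal' (R := R) hn hn'
  have block_transpose := congrArg transpose block
  rw [transpose_submatrix, dimerTransfer_transpose, blockDiagonal'_transpose] at block_transpose
  rw [pow_two, ← submatrix_mul_equiv _ _ _ (sigmaSymmDiffEquiv (evenColumns n)ᶜ), block,
    block_transpose, ← blockDiagonal'_mul]
  simp only [compoundMatrix_mul, compoundMatrix_transpose, transpose_transpose]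

theorem trace_dimerTransfer_pow (hn : Even n) (hn' : 2 < n) {m : ℕ} (hm : Even m) :
    (dimerTransfer ℂ (Fin n) ^ m).trace =
      ((∑ s : Finset (Fin n), ∏ r ∈ s, Real.exp (m * energy n (#s + 1) r) : ℝ) : ℂ) := by
  obtain ⟨p, rfl⟩ := hm
  rw [← two_mul, pow_mul, ← trace_submatrix_equiv_pow _ (sigmaSymmDiffEquiv (evenColumns n)),
    dimerTransfer_sq_submatrix_eq_blockDiagonal' hn hn', ← blockDiagonal'_pow,
    trace_blockDiagonal', ← (sigmaPowersetCardEquiv (Fin n)).sum_comp, Fintype.sum_sigma,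
    Complex.ofReal_sum]
  refine sum_congr rfl fun k _ ↦ ?_
  rw [Pi.pow_apply, trace_compoundMatrix_pow_of_mul_eq_mul_diagonal
    (isUnit_det_waveMatrix (k + 1) hn)
    (transpose_hopMatrix_mul_hopMatrix_mul_waveMatrix (k + 1) hn hn'), Complex.ofReal_sum]
  refine sum_congr rfl fun s _ ↦ ?_
  rw [Complex.ofReal_prod]
  refine prod_congr rfl fun r _ ↦ ?_
  have hs : #(sigmaPowersetCardEquiv (Fin n) ⟨k, s⟩) = k := s.2
  rw [hs, ← Complex.ofReal_pow, ← Real.exp_nat_mul]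
  congr 2
  push_cast
  ring

end TraceFormula

/-! ### Perfect matchings of the torus -/

section EdgeParametrization

variable {V ι : Type*} {G : SimpleGraph V} {f : ι ↪ Sym2 V}

lemma isPerfectMatchingSet_map_iff (hf : Set.range f = G.edgeSet) (A : Finset ι) :
    IsPerfectMatchingSet G (A.map f) ↔ ∀ v, ∃! x, x ∈ A ∧ v ∈ f x := by
  have edges : ∀ e ∈ A.map f, e ∈ G.edgeSet := by
    intro e he
    obtain ⟨x, -, rfl⟩ := mem_map.1 he
    exact hf ▸ Set.mem_range_self x
  rw [IsPerfectMatchingSet, and_iff_right edges]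
  refine forall_congr' fun v ↦ ⟨?_, ?_⟩
  · rintro ⟨e, ⟨he, hv⟩, unique⟩
    obtain ⟨x, hx, rfl⟩ := mem_map.1 he
    exact ⟨x, ⟨hx, hv⟩, fun y hy ↦ f.injective (unique _ ⟨mem_map_of_mem f hy.1, hy.2⟩)⟩
  · rintro ⟨x, hx, unique⟩
    refine ⟨f x, ⟨mem_map_of_mem f hx.1, hx.2⟩, ?_⟩
    rintro e ⟨he, hv⟩
    obtain ⟨y, hy, rfl⟩ := mem_map.1 he
    rw [unique y ⟨hy, hv⟩]

lemma numPerfectMatchings_eq_card_of_range_eq (hf : Set.range f = G.edgeSet) :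
    numPerfectMatchings G = Nat.card {A : Finset ι // ∀ v, ∃! x, x ∈ A ∧ v ∈ f x} := by
  classical
  refine (Nat.card_eq_of_bijective (fun A ↦ ⟨A.1.map f, (isPerfectMatchingSet_map_iff hf A).2 A.2⟩)
    ⟨fun A B hAB ↦ Subtype.ext (map_injective f (congrArg Subtype.val hAB)), ?_⟩).symm
  rintro ⟨M, hM⟩
  obtain ⟨A, rfl⟩ : ∃ A : Finset ι, A.map f = M := by
    refine ⟨M.preimage f f.injective.injOn, ?_⟩
    rw [map_eq_image, image_preimage, filter_true_of_mem fun e he ↦ hf ▸ hM.1 e he]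
  exact ⟨⟨A, (isPerfectMatchingSet_map_iff hf A).1 hM⟩, rfl⟩

end EdgeParametrization

lemma existsUnique_mem_of_four_iff {ι : Type*} {A : Finset ι} {a b c d : ι}
    (hne : [a, b, c, d].Nodup) :
    (∃! x, x ∈ A ∧ (x = a ∨ x = b ∨ x = c ∨ x = d)) ↔
      ExactlyOne (a ∈ A) (b ∈ A) (c ∈ A) (d ∈ A) := by
  simp only [List.nodup_cons, List.mem_cons, List.not_mem_nil, or_false, not_or,
    not_false_eq_true, List.nodup_nil, and_true] at hne
  unfold ExactlyOne
  constructor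
  · rintro ⟨x, ⟨hx, hx'⟩, unique⟩
    have eq_of_mem (y : ι) (hy : y = a ∨ y = b ∨ y = c ∨ y = d) (hyA : y ∈ A) : y = x :=
      unique y ⟨hyA, hy⟩
    have := eq_of_mem a
    have := eq_of_mem b
    have := eq_of_mem c
    have := eq_of_mem d
    rcases hx' with rfl | rfl | rfl | rfl <;> grind
  · unfold ExistsUnique
    grind

section TorusEdges

variable {m n : ℕ}

/-- The edges of the torus grid graph: the summand `inl` parametrizes the edges within a row by
their left ends, the summand `inr` those between rows by their lower ends. -/
def torusEdge (m n : ℕ) : (ZMod m × ZMod n) ⊕ (ZMod m × ZMod n) → Sym2 (ZMod m × ZMod n)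
  | .inl v => s(v, v + (0, 1))
  | .inr v => s(v, v + (1, 0))

lemma zmod_add_one_ne_of_eq_add_one [Fact (2 < n)] {a b : ZMod n} (h : a = b + 1) : a + 1 ≠ b :=
  fun h' ↦ ZMod.neg_one_ne_one (n := n) (by linear_combination h - h')

lemma torusEdge_injective [Fact (2 < m)] [Fact (2 < n)] : Function.Injective (torusEdge m n) := by
  have : Fact (1 < n) := ⟨one_lt_two.trans Fact.out⟩
  rintro (⟨a, b⟩ | ⟨a, b⟩) (⟨c, d⟩ | ⟨c, d⟩) h <;>
    simp only [torusEdge, Sym2.eq_iff, Prod.mk_add_mk, Prod.mk.injEq, add_zero] at h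
  · rcases h with ⟨⟨rfl, rfl⟩, -⟩ | ⟨⟨-, hbd⟩, -, hbd'⟩
    exacts [rfl, absurd hbd' (zmod_add_one_ne_of_eq_add_one hbd)]
  · rcases h with ⟨⟨-, hbd⟩, -, hbd'⟩ | ⟨⟨-, hbd⟩, -, hbd'⟩ <;> simp [hbd] at hbd'
  · rcases h with ⟨⟨-, hbd⟩, -, hbd'⟩ | ⟨⟨-, hbd⟩, -, hbd'⟩ <;> simp [hbd] at hbd'
  · rcases h with ⟨⟨rfl, rfl⟩, -⟩ | ⟨⟨hac, -⟩, hac', -⟩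
    exacts [rfl, absurd hac' (zmod_add_one_ne_of_eq_add_one hac)]

lemma range_torusEdge [Fact (1 < m)] [Fact (1 < n)] :
    Set.range (torusEdge m n) = (torusGridGraph m n).edgeSet := by
  ext e
  constructor
  · rintro ⟨v | v, rfl⟩ <;> simp [torusEdge, torusGridGraph, Prod.ext_iff]
  · induction e using Sym2.ind with | _ u v =>
    rw [SimpleGraph.mem_edgeSet, torusGridGraph, SimpleGraph.fromRel_adj]
    rintro ⟨-, (rfl | rfl) | (rfl | rfl)⟩
    · exact ⟨.inr u, rfl⟩
    · exact ⟨.inl u, rfl⟩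
    · exact ⟨.inr v, Sym2.eq_swap⟩
    · exact ⟨.inl v, Sym2.eq_swap⟩

lemma mem_torusEdge_iff (i : ZMod m) (j : ZMod n) (x : (ZMod m × ZMod n) ⊕ (ZMod m × ZMod n)) :
    (i, j) ∈ torusEdge m n x ↔
      x = .inr (i - 1, j) ∨ x = .inr (i, j) ∨ x = .inl (i, j) ∨ x = .inl (i, j - 1) := by
  rcases x with ⟨a, b⟩ | ⟨a, b⟩
  · simp [torusEdge, Prod.ext_iff, eq_sub_iff_add_eq, eq_comm]
  · simp [torusEdge, Prod.ext_iff, eq_sub_iff_add_eq, eq_comm, or_comm]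

end TorusEdges

/-- A set of edges of the torus as the families, indexed by the rows, of its vertical edges below
the row and of its horizontal edges within the row. -/
def edgesEquivRows (α β : Type*) [AddGroup α] [One α] [Fintype α] [Fintype β] [DecidableEq α]
    [DecidableEq β] : Finset ((α × β) ⊕ (α × β)) ≃ (α → Finset β) × (α → Finset β) where
  toFun A := (fun i ↦ {j | .inr (i - 1, j) ∈ A}, fun i ↦ {j | .inl (i, j) ∈ A})
  invFun S := disjSum {v | v.2 ∈ S.2 v.1} {v | v.2 ∈ S.1 (v.1 + 1)}
  left_inv A := by ext (v | v) <;> simp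
  right_inv S := by ext <;> simp

section TransferMatrix

variable {m n : ℕ} [Fact (2 < m)] [Fact (2 < n)] [NeZero m] [NeZero n]

lemma existsUnique_mem_torusEdge_iff (A : Finset ((ZMod m × ZMod n) ⊕ (ZMod m × ZMod n))) :
    (∀ v, ∃! x, x ∈ A ∧ v ∈ torusEdge m n x) ↔
      ∀ i, IsRowCovering ((edgesEquivRows _ _ A).1 i) ((edgesEquivRows _ _ A).1 (i + 1))
        ((edgesEquivRows _ _ A).2 i) := by
  have : Fact (1 < m) := ⟨one_lt_two.trans Fact.out⟩
  have : Fact (1 < n) := ⟨one_lt_two.trans Fact.out⟩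
  rw [Prod.forall]
  refine forall_congr' fun i ↦ forall_congr' fun j ↦ ?_
  simp only [mem_torusEdge_iff]
  rw [existsUnique_mem_of_four_iff (by simp [eq_sub_iff_add_eq])]
  simp [edgesEquivRows]

lemma numPerfectMatchings_torusGridGraph_eq_sum :
    numPerfectMatchings (torusGridGraph m n) = ∑ S : ZMod m → Finset (ZMod n),
      ∏ i, #{h | IsRowCovering (S i) (S (i + 1)) h} := by
  have : Fact (1 < m) := ⟨one_lt_two.trans Fact.out⟩
  have : Fact (1 < n) := ⟨one_lt_two.trans Fact.out⟩
  calc numPerfectMatchings (torusGridGraph m n)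
    _ = Nat.card {S : (ZMod m → Finset (ZMod n)) × (ZMod m → Finset (ZMod n)) //
          ∀ i, IsRowCovering (S.1 i) (S.1 (i + 1)) (S.2 i)} :=
        (numPerfectMatchings_eq_card_of_range_eq (f := ⟨_, torusEdge_injective⟩)
          range_torusEdge).trans <| Nat.card_congr <|
            (edgesEquivRows _ _).subtypeEquiv existsUnique_mem_torusEdge_iff
    _ = ∑ S : ZMod m → Finset (ZMod n), #{h : ZMod m → Finset (ZMod n) |
          ∀ i, IsRowCovering (S i) (S (i + 1)) (h i)} := by
        rw [Nat.card_eq_fintype_card, Fintype.card_subtype, card_filter, Fintype.sum_prod_type]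
        simp only [card_filter]
    _ = _ := by
        refine sum_congr rfl fun S _ ↦ ?_
        rw [← Fintype.card_piFinset]
        congr 1
        ext h
        simp

lemma numPerfectMatchings_torusGridGraph_eq_trace (R : Type*) [CommRing R] :
    (numPerfectMatchings (torusGridGraph m n) : R) = (dimerTransfer R (Fin n) ^ m).trace := by
  obtain ⟨m, rfl⟩ := Nat.exists_eq_succ_of_ne_zero (NeZero.ne m)
  obtain ⟨n, rfl⟩ := Nat.exists_eq_succ_of_ne_zero (NeZero.ne n)
  rw [trace_pow_succ_eq_sum_closed_walks, numPerfectMatchings_torusGridGraph_eq_sum]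
  push_cast
  rfl

end TransferMatrix

theorem numPerfectMatchings_torusGridGraph {m n : ℕ} (hm : Even m) (hn : Even n) (hm' : 2 < m)
    (hn' : 2 < n) : (numPerfectMatchings (torusGridGraph m n) : ℝ) =
      ∑ s : Finset (Fin n), ∏ r ∈ s, Real.exp (m * energy n (#s + 1) r) := by
  have : Fact (2 < m) := ⟨hm'⟩
  have : Fact (2 < n) := ⟨hn'⟩
  have : NeZero m := ⟨by lia⟩
  have : NeZero n := ⟨by lia⟩
  exact_mod_cast (numPerfectMatchings_torusGridGraph_eq_trace ℂ).trans
    (trace_dimerTransfer_pow hn hn' hm)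

/-! ### Bounds by the largest term -/

lemma two_mul_sum_le_sum_abs_of_sum_eq_zero {ι : Type*} [Fintype ι] {f : ι → ℝ}
    (hf : ∑ i, f i = 0) (s : Finset ι) : 2 * ∑ i ∈ s, f i ≤ ∑ i, |f i| := by
  classical
  have sum_compl : ∑ i ∈ sᶜ, f i = -∑ i ∈ s, f i := by
    rw [← sum_add_sum_compl s] at hf
    linarith
  calc 2 * ∑ i ∈ s, f i = ∑ i ∈ s, f i + -∑ i ∈ sᶜ, f i := by rw [sum_compl]; ring
    _ ≤ ∑ i ∈ s, |f i| + ∑ i ∈ sᶜ, |f i| :=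
        add_le_add ((le_abs_self _).trans (abs_sum_le_sum_abs _ _))
          ((neg_le_abs _).trans (abs_sum_le_sum_abs _ _))
    _ = ∑ i, |f i| := sum_add_sum_compl s _

/-- The sum of the absolute energies over all momenta, twice the maximal energy of a set of
momenta. -/
noncomputable def totalAbsEnergy (n δ : ℕ) : ℝ := ∑ r ∈ range n, |energy n δ r|

section EnergyBounds

variable {h : ℕ} (δ m : ℕ)

lemma energy_add_half (hh : h ≠ 0) (r : ℕ) :
    energy (h + h) δ (r + h) = -energy (h + h) δ r := by
  have momentum_add_half : momentum (h + h) δ (r + h) = momentum (h + h) δ r + Real.pi := by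
    simp only [momentum]
    push_cast
    field_simp
    ring
  rw [energy, energy, momentum_add_half, Real.cos_add_pi, Real.arsinh_neg]

lemma sum_energy (hh : h ≠ 0) : ∑ r : Fin (h + h), energy (h + h) δ r = 0 := by
  rw [Fin.sum_univ_eq_sum_range, sum_range_add, ← sum_add_distrib]
  exact sum_eq_zero fun r _ ↦ by rw [add_comm h r, energy_add_half δ hh, add_neg_cancel]

lemma totalAbsEnergy_add_self (hh : h ≠ 0) :
    totalAbsEnergy (h + h) δ = 2 * ∑ r : Fin h, |energy (h + h) δ r| := by
  rw [totalAbsEnergy, sum_range_add, two_mul,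
    Fin.sum_univ_eq_sum_range fun r ↦ |energy (h + h) δ r|]
  congr 1
  exact sum_congr rfl fun r _ ↦ by rw [add_comm h r, energy_add_half δ hh, abs_neg]

/-- One of `r` and `r + h` is occupied for each `r < h`. -/
lemma exists_card_eq_half_two_mul_sum_energy (hh : h ≠ 0) :
    ∃ s : Finset (Fin (h + h)), #s = h ∧
      2 * ∑ r ∈ s, energy (h + h) δ r = totalAbsEnergy (h + h) δ := by
  let occupied : Fin h → Fin (h + h) := fun r ↦
    if 0 ≤ energy (h + h) δ r then r.castAdd h else r.addNat h
  have occupied_injective : Function.Injective occupied := by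
    intro r s hrs
    have := r.2
    have := s.2
    simp only [occupied] at hrs
    split_ifs at hrs <;> simp only [Fin.ext_iff, Fin.val_castAdd, Fin.val_addNat] at hrs ⊢ <;> lia
  have energy_occupied (r : Fin h) : energy (h + h) δ (occupied r) = |energy (h + h) δ r| := by
    simp only [occupied]
    split_ifs with hr
    · rw [Fin.val_castAdd, abs_of_nonneg hr]
    · rw [Fin.val_addNat, energy_add_half δ hh, abs_of_neg (not_le.1 hr)]
  refine ⟨univ.map ⟨occupied, occupied_injective⟩, by simp, ?_⟩
  rw [sum_map, totalAbsEnergy_add_self δ hh]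
  simp only [Function.Embedding.coeFn_mk, energy_occupied]

lemma sum_prod_exp_energy_le (hh : h ≠ 0) {B : ℝ} (hB : ∀ δ, totalAbsEnergy (h + h) δ ≤ B) :
    ∑ s : Finset (Fin (h + h)), ∏ r ∈ s, Real.exp (m * energy (h + h) (#s + 1) r) ≤
      2 ^ (h + h) * Real.exp (m / 2 * B) := by
  have term_le (s : Finset (Fin (h + h))) :
      ∏ r ∈ s, Real.exp (m * energy (h + h) (#s + 1) r) ≤ Real.exp (m / 2 * B) := by
    have sum_le := two_mul_sum_le_sum_abs_of_sum_eq_zero (sum_energy (#s + 1) hh) s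
    rw [Fin.sum_univ_eq_sum_range fun r ↦ |energy (h + h) (#s + 1) r|] at sum_le
    have sum_le_B := sum_le.trans (hB (#s + 1))
    rw [← Real.exp_sum, ← mul_sum]
    refine Real.exp_le_exp.2 ?_
    calc (m : ℝ) * ∑ r ∈ s, energy (h + h) (#s + 1) r
      _ = m / 2 * (2 * ∑ r ∈ s, energy (h + h) (#s + 1) r) := by ring
      _ ≤ m / 2 * B := by gcongr
  calc _ ≤ ∑ _ : Finset (Fin (h + h)), Real.exp (m / 2 * B) := sum_le_sum fun s _ ↦ term_le s
    _ = 2 ^ (h + h) * Real.exp (m / 2 * B) := by simp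

lemma exp_totalAbsEnergy_le_sum (hh : h ≠ 0) :
    Real.exp (m / 2 * totalAbsEnergy (h + h) (h + 1)) ≤
      ∑ s : Finset (Fin (h + h)), ∏ r ∈ s, Real.exp (m * energy (h + h) (#s + 1) r) := by
  obtain ⟨s, hs, hsum⟩ := exists_card_eq_half_two_mul_sum_energy (h + 1) hh
  calc Real.exp (m / 2 * totalAbsEnergy (h + h) (h + 1))
    _ = ∏ r ∈ s, Real.exp (m * energy (h + h) (#s + 1) r) := by
        rw [hs, ← Real.exp_sum, ← mul_sum, ← hsum]
        ring_nf
    _ ≤ _ := single_le_sum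
        (f := fun s : Finset (Fin (h + h)) ↦ ∏ r ∈ s, Real.exp (m * energy (h + h) (#s + 1) r))
        (fun t _ ↦ prod_nonneg fun _ _ ↦ (Real.exp_pos _).le) (mem_univ s)

end EnergyBounds

/-! ### Catalan's constant as an integral of the energy -/

section Catalan

open MeasureTheory intervalIntegral Real

lemma continuous_div_sqrt_one_add_sq {X : Type*} [TopologicalSpace X] {f g : X → ℝ}
    (hf : Continuous f) (hg : Continuous g) : Continuous fun x ↦ f x / √(1 + g x ^ 2) :=
  hf.div (by fun_prop) fun x ↦ (Real.sqrt_pos.2 (by positivity)).ne'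

lemma arsinh_eq_integral (c : ℝ) : arsinh c = ∫ t in (0 : ℝ)..1, c / √(1 + (t * c) ^ 2) := by
  have hasDerivAt_arsinh_mul (t : ℝ) :
      HasDerivAt (fun t ↦ arsinh (t * c)) (c / √(1 + (t * c) ^ 2)) t :=
    ((hasDerivAt_id t).mul_const c).arsinh.congr_deriv (by simp [div_eq_inv_mul])
  rw [integral_eq_sub_of_hasDerivAt fun t _ ↦ hasDerivAt_arsinh_mul t]
  · simp
  · exact (continuous_div_sqrt_one_add_sq (by fun_prop) (by fun_prop)).intervalIntegrable 0 1

lemma hasDerivAt_arcsin_mul_sin_div {t : ℝ} (ht : t ≠ 0) (θ : ℝ) :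
    HasDerivAt (fun θ ↦ arcsin (t * sin θ / √(1 + t ^ 2)) / t)
      (cos θ / √(1 + (t * cos θ) ^ 2)) θ := by
  have sq_sqrt : √(1 + t ^ 2) ^ 2 = 1 + t ^ 2 := Real.sq_sqrt (by positivity)
  have one_sub_sq :
      1 - (t * sin θ / √(1 + t ^ 2)) ^ 2 = (1 + (t * cos θ) ^ 2) / (1 + t ^ 2) := by
    rw [div_pow, sq_sqrt]
    field_simp
    linear_combination (-t ^ 2) * sin_sq_add_cos_sq θ
  have one_sub_sq_pos : 0 < 1 - (t * sin θ / √(1 + t ^ 2)) ^ 2 := by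
    rw [one_sub_sq]
    positivity
  have hderiv := ((hasDerivAt_arcsin (x := t * sin θ / √(1 + t ^ 2)) (by nlinarith)
    (by nlinarith)).comp θ (((hasDerivAt_sin θ).const_mul t).div_const √(1 + t ^ 2))).div_const t
  refine hderiv.congr_deriv ?_
  rw [one_sub_sq, Real.sqrt_div (by positivity)]
  field_simp

lemma integral_cos_div_sqrt {t : ℝ} (ht : t ≠ 0) :
    ∫ θ in (0 : ℝ)..(π / 2), cos θ / √(1 + (t * cos θ) ^ 2) = arctan t / t := by
  rw [integral_eq_sub_of_hasDerivAt fun θ _ ↦ hasDerivAt_arcsin_mul_sin_div ht θ]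
  · simp [arctan_eq_arcsin]
  · exact (continuous_div_sqrt_one_add_sq continuous_cos (by fun_prop)).intervalIntegrable _ _

lemma hasSum_arctan_div {t : ℝ} (ht : t ∈ Set.Ioo 0 1) :
    HasSum (fun k : ℕ ↦ (-1) ^ k / (2 * k + 1) * t ^ (2 * k)) (arctan t / t) := by
  have hasSum_arctan := Real.hasSum_arctan (x := t) (by rw [norm_of_nonneg ht.1.le]; exact ht.2)
  refine (hasSum_arctan.div_const t).congr_fun fun k ↦ ?_
  have := ht.1.ne'
  push_cast
  field_simp
  ring

lemma setIntegral_Ioo_pow_two_mul (k : ℕ) :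
    ∫ t in Set.Ioo (0 : ℝ) 1, t ^ (2 * k) = 1 / (2 * k + 1) := by
  rw [← integral_Ioc_eq_integral_Ioo, ← integral_of_le zero_le_one, integral_pow]
  simp

lemma summable_one_div_two_mul_add_one_sq :
    Summable fun k : ℕ ↦ 1 / (2 * (k : ℝ) + 1) * (1 / (2 * (k : ℝ) + 1)) := by
  have hinj : Function.Injective fun k : ℕ ↦ 2 * k + 1 := fun a b hab ↦ by simpa using hab
  exact ((Real.summable_one_div_nat_pow.2 one_lt_two).comp_injective hinj).congr fun k ↦ by
    simp [sq]

lemma integral_arctan_div : ∫ t in (0 : ℝ)..1, arctan t / t = catalanConstant := by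
  have integrable_term (k : ℕ) : IntegrableOn
      (fun t : ℝ ↦ (-1) ^ k / (2 * (k : ℝ) + 1) * t ^ (2 * k)) (Set.Ioo 0 1) :=
    (Continuous.integrableOn_Icc (by fun_prop)).mono_set Set.Ioo_subset_Icc_self
  have integral_norm_term (k : ℕ) :
      ∫ t in Set.Ioo (0 : ℝ) 1, ‖(-1) ^ k / (2 * (k : ℝ) + 1) * t ^ (2 * k)‖ =
        1 / (2 * k + 1) * (1 / (2 * k + 1)) := by
    nth_rw 2 [← setIntegral_Ioo_pow_two_mul k]
    rw [← MeasureTheory.integral_const_mul]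
    refine setIntegral_congr_fun measurableSet_Ioo fun t ht ↦ ?_
    have coeff_nonneg : (0 : ℝ) ≤ 2 * k + 1 := by positivity
    simp [abs_of_nonneg coeff_nonneg, abs_of_pos ht.1]
  have hasSum_integral := hasSum_integral_of_summable_integral_norm integrable_term
    (by simpa only [integral_norm_term] using summable_one_div_two_mul_add_one_sq)
  calc ∫ t in (0 : ℝ)..1, arctan t / t
    _ = ∫ t in Set.Ioo (0 : ℝ) 1, ∑' k : ℕ, (-1) ^ k / (2 * (k : ℝ) + 1) * t ^ (2 * k) := by
        rw [integral_of_le zero_le_one, integral_Ioc_eq_integral_Ioo]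
        exact setIntegral_congr_fun measurableSet_Ioo fun t ht ↦ (hasSum_arctan_div ht).tsum_eq.symm
    _ = ∑' k : ℕ, (-1) ^ k / (2 * (k : ℝ) + 1) * (1 / (2 * k + 1)) := by
        rw [← hasSum_integral.tsum_eq]
        simp only [MeasureTheory.integral_const_mul, setIntegral_Ioo_pow_two_mul]
    _ = catalanConstant := tsum_congr fun k ↦ by field_simp

lemma integral_arsinh_cos : ∫ θ in (0 : ℝ)..(π / 2), arsinh (cos θ) = catalanConstant := by
  have continuous_integrand : Continuous (Function.uncurry fun θ t : ℝ ↦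
      cos θ / √(1 + (t * cos θ) ^ 2)) :=
    continuous_div_sqrt_one_add_sq (by fun_prop) (by fun_prop)
  calc ∫ θ in (0 : ℝ)..(π / 2), arsinh (cos θ)
    _ = ∫ θ in (0 : ℝ)..(π / 2), ∫ t in (0 : ℝ)..1, cos θ / √(1 + (t * cos θ) ^ 2) := by
        simp only [← arsinh_eq_integral]
    _ = ∫ t in (0 : ℝ)..1, ∫ θ in (0 : ℝ)..(π / 2), cos θ / √(1 + (t * cos θ) ^ 2) :=
        intervalIntegral_intervalIntegral_swap <|
          (continuous_integrand.continuousOn.integrableOn_compact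
            (isCompact_uIcc.prod isCompact_uIcc)).mono_set
            (Set.prod_mono Set.uIoc_subset_uIcc Set.uIoc_subset_uIcc)
    _ = ∫ t in (0 : ℝ)..1, arctan t / t := by
        simp only [integral_of_le zero_le_one]
        exact setIntegral_congr_fun measurableSet_Ioc fun t ht ↦ integral_cos_div_sqrt ht.1.ne'
    _ = catalanConstant := integral_arctan_div

lemma lipschitzWith_arsinh : LipschitzWith 1 arsinh := by
  refine lipschitzWith_of_nnnorm_deriv_le (fun x ↦ (hasDerivAt_arsinh x).differentiableAt)
    fun x ↦ ?_
  have one_le_sqrt : 1 ≤ √(1 + x ^ 2) := Real.one_le_sqrt.2 (by nlinarith [sq_nonneg x])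
  rw [(hasDerivAt_arsinh x).deriv, ← NNReal.coe_le_coe, coe_nnnorm, norm_inv,
    norm_of_nonneg (by positivity)]
  exact inv_le_one_of_one_le₀ one_le_sqrt

lemma lipschitzWith_abs_arsinh_cos : LipschitzWith 1 fun θ ↦ |arsinh (cos θ)| := by
  simpa [Function.comp_def] using
    lipschitzWith_one_norm.comp (lipschitzWith_arsinh.comp lipschitzWith_cos)

lemma abs_arsinh_cos_periodic : Function.Periodic (fun θ ↦ |arsinh (cos θ)|) π := fun θ ↦ by
  simp only [cos_add_pi, arsinh_neg, abs_neg]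

lemma integral_abs_arsinh_cos_zero_pi_div_two :
    ∫ θ in (0 : ℝ)..(π / 2), |arsinh (cos θ)| = catalanConstant := by
  rw [← integral_arsinh_cos]
  refine integral_congr fun θ hθ ↦ ?_
  rw [Set.uIcc_of_le (by positivity)] at hθ
  exact abs_of_nonneg (arsinh_nonneg_iff.2
    (cos_nonneg_of_mem_Icc ⟨by linarith [hθ.1, pi_pos], hθ.2⟩))

lemma integral_abs_arsinh_cos (a : ℝ) :
    ∫ θ in a..(a + 2 * π), |arsinh (cos θ)| = 4 * catalanConstant := by
  have integrable (a b : ℝ) : IntervalIntegrable (fun θ ↦ |arsinh (cos θ)|) volume a b :=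
    lipschitzWith_abs_arsinh_cos.continuous.intervalIntegrable a b
  have second_quarter :
      ∫ θ in (π / 2)..π, |arsinh (cos θ)| = ∫ θ in (0 : ℝ)..(π / 2), |arsinh (cos θ)| := by
    have reflect := integral_comp_sub_left (a := 0) (b := π / 2) (fun θ ↦ |arsinh (cos θ)|) π
    simpa only [cos_pi_sub, arsinh_neg, abs_neg, sub_zero, sub_half] using reflect.symm
  have half_period (a : ℝ) : ∫ θ in a..(a + π), |arsinh (cos θ)| = 2 * catalanConstant := by
    rw [abs_arsinh_cos_periodic.intervalIntegral_add_eq a 0, zero_add,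
      ← integral_add_adjacent_intervals (integrable 0 (π / 2)) (integrable _ _), second_quarter,
      integral_abs_arsinh_cos_zero_pi_div_two, two_mul]
  rw [← integral_add_adjacent_intervals (integrable a (a + π)) (integrable _ _), two_mul,
    ← add_assoc, half_period, half_period]
  ring

end Catalan

/-! ### Riemann sums -/

section RiemannSum

open MeasureTheory intervalIntegral

lemma abs_mul_sub_integral_le_of_lipschitzWith {K : NNReal} {f : ℝ → ℝ} (hf : LipschitzWith K f)
    (x : ℝ) {w : ℝ} (hw : 0 ≤ w) :
    |f x * w - ∫ y in x..(x + w), f y| ≤ K * w * w := by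
  have dist_le (y : ℝ) (hy : y ∈ Set.uIoc x (x + w)) : ‖f x - f y‖ ≤ K * w := by
    rw [Set.uIoc_of_le (by linarith)] at hy
    refine (hf.dist_le_mul x y).trans ?_
    gcongr
    rw [Real.dist_eq, abs_le]
    constructor <;> linarith [hy.1, hy.2]
  calc |f x * w - ∫ y in x..(x + w), f y|
    _ = ‖∫ y in x..(x + w), (f x - f y)‖ := by
        rw [integral_sub (by simp) (hf.continuous.intervalIntegrable _ _),
          intervalIntegral.integral_const, add_sub_cancel_left, smul_eq_mul, mul_comm w,
          Real.norm_eq_abs]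
    _ ≤ K * w * |x + w - x| := norm_integral_le_of_norm_le_const dist_le
    _ = K * w * w := by rw [add_sub_cancel_left, abs_of_nonneg hw]

lemma abs_riemannSum_sub_integral_le_of_lipschitzWith {K : NNReal} {f : ℝ → ℝ}
    (hf : LipschitzWith K f) (x : ℝ) {w : ℝ} (hw : 0 ≤ w) (n : ℕ) :
    |(∑ r ∈ range n, f (x + r * w)) * w - ∫ y in x..(x + n * w), f y| ≤ n * (K * w * w) := by
  have integral_eq_sum :
      ∫ y in x..(x + n * w), f y = ∑ r ∈ range n, ∫ y in (x + r * w)..(x + r * w + w), f y := by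
    have h := sum_integral_adjacent_intervals (μ := volume) (f := f) (a := fun r : ℕ ↦ x + r * w)
      (n := n) fun r _ ↦ hf.continuous.intervalIntegrable _ _
    simpa [add_mul, add_assoc] using h.symm
  rw [integral_eq_sum, sum_mul, ← sum_sub_distrib]
  calc _ ≤ ∑ r ∈ range n, |f (x + r * w) * w - ∫ y in (x + r * w)..(x + r * w + w), f y| :=
        abs_sum_le_sum_abs _ _
    _ ≤ ∑ _ ∈ range n, K * w * w :=
        sum_le_sum fun r _ ↦ abs_mul_sub_integral_le_of_lipschitzWith hf _ hw
    _ = n * (K * w * w) := by simp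

end RiemannSum

lemma abs_totalAbsEnergy_div_sub_le {n : ℕ} (hn : n ≠ 0) (δ : ℕ) :
    |totalAbsEnergy n δ / (2 * n) - catalanConstant / Real.pi| ≤ Real.pi / n := by
  have totalAbsEnergy_eq : totalAbsEnergy n δ =
      ∑ r ∈ range n, |Real.arsinh (Real.cos (δ * Real.pi / n + r * (2 * Real.pi / n)))| := by
    refine sum_congr rfl fun r _ ↦ ?_
    rw [energy, momentum]
    ring_nf
  have riemann := abs_riemannSum_sub_integral_le_of_lipschitzWith lipschitzWith_abs_arsinh_cos
    (δ * Real.pi / n) (w := 2 * Real.pi / n) (by positivity) n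
  rw [← totalAbsEnergy_eq, mul_div_cancel₀ _ (by positivity), integral_abs_arsinh_cos] at riemann
  calc |totalAbsEnergy n δ / (2 * n) - catalanConstant / Real.pi|
    _ = |totalAbsEnergy n δ * (2 * Real.pi / n) - 4 * catalanConstant| / (4 * Real.pi) := by
        rw [← abs_of_pos (show 0 < 4 * Real.pi by positivity), ← abs_div]
        congr 1
        field_simp
        ring
    _ ≤ n * ((1 : NNReal) * (2 * Real.pi / n) * (2 * Real.pi / n)) / (4 * Real.pi) := by gcongr
    _ = Real.pi / n := by
        push_cast
        field_simp
        ring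

/-! ### The free energy of the torus -/

section FreeEnergy

variable {m n : ℕ}

lemma le_log_numPerfectMatchings_torusGridGraph_div (hm : Even m) (hn : Even n) (hm' : 2 < m)
    (hn' : 2 < n) :
    catalanConstant / Real.pi - Real.pi / n ≤
      Real.log (numPerfectMatchings (torusGridGraph m n)) / (m * n) := by
  rw [numPerfectMatchings_torusGridGraph hm hn hm' hn']
  obtain ⟨h, rfl⟩ := hn
  have le_sum := exp_totalAbsEnergy_le_sum m (show h ≠ 0 by lia)
  have le_log := (Real.le_log_iff_exp_le ((Real.exp_pos _).trans_le le_sum)).2 le_sum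
  calc catalanConstant / Real.pi - Real.pi / (h + h : ℕ)
    _ ≤ totalAbsEnergy (h + h) (h + 1) / (2 * (h + h : ℕ)) := by
        linarith [(abs_le.1 (abs_totalAbsEnergy_div_sub_le (n := h + h) (by lia) (h + 1))).1]
    _ = m / 2 * totalAbsEnergy (h + h) (h + 1) / (m * (h + h : ℕ)) := by field_simp
    _ ≤ _ := by gcongr

lemma log_numPerfectMatchings_torusGridGraph_div_le (hm : Even m) (hn : Even n) (hm' : 2 < m)
    (hn' : 2 < n) :
    Real.log (numPerfectMatchings (torusGridGraph m n)) / (m * n) ≤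
      catalanConstant / Real.pi + Real.pi / n + Real.log 2 / m := by
  rw [numPerfectMatchings_torusGridGraph hm hn hm' hn']
  obtain ⟨h, rfl⟩ := hn
  have totalAbsEnergy_le (δ : ℕ) : totalAbsEnergy (h + h) δ ≤
      (catalanConstant / Real.pi + Real.pi / (h + h : ℕ)) * (2 * (h + h : ℕ)) := by
    rw [← div_le_iff₀ (by positivity)]
    linarith [(abs_le.1 (abs_totalAbsEnergy_div_sub_le (n := h + h) (by lia) δ)).2]
  have sum_le := sum_prod_exp_energy_le m (by lia) totalAbsEnergy_le
  have log_le := Real.log_le_log (sum_pos (fun s _ ↦ prod_pos fun r _ ↦ Real.exp_pos _)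
    univ_nonempty) sum_le
  rw [Real.log_mul (by positivity) (by positivity), Real.log_pow, Real.log_exp] at log_le
  rw [div_le_iff₀ (by positivity)]
  refine log_le.trans_eq ?_
  field_simp
  ring

lemma abs_log_numPerfectMatchings_torusGridGraph_div_sub_le (hm : Even m) (hn : Even n)
    (hm' : 2 < m) (hn' : 2 < n) :
    |Real.log (numPerfectMatchings (torusGridGraph m n)) / (m * n) - catalanConstant / Real.pi| ≤
      Real.pi / n + Real.log 2 / m := by
  have log_two_div_nonneg : 0 ≤ Real.log 2 / m := by positivity
  rw [abs_le]
  constructor <;> linarith [le_log_numPerfectMatchings_torusGridGraph_div hm hn hm' hn',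
    log_numPerfectMatchings_torusGridGraph_div_le hm hn hm' hn']

end FreeEnergy

/-- (1/(mn))·log Z_{m,n} → G/π as m, n → ∞ through even integers, where Z_{m,n} is the
number of perfect matchings of the m×n torus grid graph and G is Catalan's constant. -/
theorem log_numPerfectMatchings_torus_tendsto :
    ∀ ε : ℝ, 0 < ε → ∃ M : ℕ, ∀ m n : ℕ, Even m → Even n → M ≤ m → M ≤ n →
      |(1 / ((m : ℝ) * n)) * Real.log (numPerfectMatchings (torusGridGraph m n)) -
        catalanConstant / Real.pi| < ε := by
  intro ε hε
  obtain ⟨K, hK⟩ := exists_nat_gt ((Real.pi + Real.log 2) / ε)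
  have hK_pos : (0 : ℝ) < K := lt_trans (by positivity) hK
  refine ⟨max K 3, fun m n hm hn hMm hMn ↦ ?_⟩
  obtain ⟨hKm, hm'⟩ := max_le_iff.1 hMm
  obtain ⟨hKn, hn'⟩ := max_le_iff.1 hMn
  rw [one_div_mul_eq_div]
  calc _ ≤ Real.pi / n + Real.log 2 / m :=
        abs_log_numPerfectMatchings_torusGridGraph_div_sub_le hm hn hm' hn'
    _ ≤ Real.pi / K + Real.log 2 / K := by gcongr
    _ = (Real.pi + Real.log 2) / K := (add_div _ _ _).symm
    _ < ε := (div_lt_comm₀ hε hK_pos).1 hK
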